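/- Let k be an algebraic closure of 𝔽₂ and K = k(t) the rational function field over k. The group of points of the Weierstrass curve W : y² + (t²+1)xy + t²y = x³ + t²x² over K is isomorphic, as an abelian group, to ℤ/10ℤ. -/

import Mathlib

/-- An algebraic closure `k` of `𝔽₂`. -/
noncomputable abbrev k : Type := AlgebraicClosure (ZMod 2)

/-- The rational function field `K = k(t)`. -/
noncomputable abbrev K : Type := RatFunc k

/-- The variable `t` of `K = k(t)`. -/
noncomputable def t : K := RatFunc.X

/-- The Weierstrass curve `W : y² + (t²+1)xy + t²y = x³ + t²x²` over `K`. -/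
noncomputable def W : WeierstrassCurve.Affine K :=
  { a₁ := t ^ 2 + 1, a₂ := t ^ 2, a₃ := t ^ 2, a₄ := 0, a₆ := 0 }
namespace Aux10
theorem aux_le {R : Type*} [CommRing R] (I : Ideal R) (e : R)
    (h : I ≤ Ideal.span {e}) : ∃ D, I = Ideal.span {e} * D := by
  refine ⟨Submodule.comap (LinearMap.mulLeft R e) I, ?_⟩
  ext x
  rw [Ideal.mem_span_singleton_mul]
  constructor
  · intro hx
    obtain ⟨z, rfl⟩ := Ideal.mem_span_singleton.mp (h hx)
    exact ⟨z, hx, rfl⟩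
  · rintro ⟨z, hz, rfl⟩
    exact hz

theorem aux_pow {R : Type*} [CommRing R] [IsDomain R] (p p' : Ideal R) (e : R) (he : e ≠ 0)
    (hp : p.IsMaximal) (hpp : p * p' = Ideal.span {e}) (n : ℕ) :
    ∀ C : Ideal R, p ^ n ≤ C → ∃ j : ℕ, C = p ^ j := by
  induction n with
  | zero =>
    intro C hC
    refine ⟨0, ?_⟩
    rw [pow_zero] at hC ⊢
    exact le_antisymm (by rw [Ideal.one_eq_top]; exact le_top) hC
  | succ n ih =>
    intro C hC
    by_cases hCt : C = ⊤
    · exact ⟨0, by rw [pow_zero, Ideal.one_eq_top, hCt]⟩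
    obtain ⟨m, hm, hCm⟩ := Ideal.exists_le_maximal C hCt
    have h1 : p ≤ m := hm.isPrime.le_of_pow_le (hC.trans hCm)
    have h2 : p = m := hp.eq_of_le hm.ne_top h1
    subst h2
    have h3 : C * p' ≤ Ideal.span {e} := by
      rw [← hpp]; exact Ideal.mul_mono_left hCm
    obtain ⟨D, hD⟩ := aux_le _ e h3
    have h4 : C = D * p := by
      apply (Ideal.span_singleton_mul_right_inj he).mp
      calc Ideal.span {e} * C = (C * p') * p := by rw [← hpp]; ring
        _ = Ideal.span {e} * (D * p) := by rw [hD]; ring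
    have h5 : p ^ n ≤ D := by
      apply (Ideal.span_singleton_mul_right_mono he).mp
      calc Ideal.span {e} * p ^ n = p ^ (n+1) * p' := by rw [← hpp]; ring
        _ ≤ C * p' := Ideal.mul_mono_left hC
        _ = _ := hD
    obtain ⟨j, hj⟩ := ih D h5
    exact ⟨j + 1, by rw [h4, hj, pow_succ]⟩

theorem aux_ideal {R : Type*} [CommRing R] [IsDomain R] (g : R) (hg : g ≠ 0) 
    [UniqueFactorizationMonoid (Localization.Away g)]
    (p p' : Ideal R) (e : R) (he : e ≠ 0)
    (hp : p.IsMaximal) (hpp : p * p' = Ideal.span {e}) (N : ℕ) (hN : p ^ N ≤ Ideal.span {g})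
    (a b c : R) (hc : c ≠ 0) (I' : Ideal R) (hI : Ideal.span {a, b} * I' = Ideal.span {c}) :
    ∃ (x y : R) (j : ℕ), x ≠ 0 ∧ y ≠ 0 ∧
      Ideal.span {x} * Ideal.span {a, b} = Ideal.span {y} * p ^ j := by
  let S := Localization.Away g
  let f := algebraMap R S
  have hle : Submonoid.powers g ≤ nonZeroDivisors R :=
    powers_le_nonZeroDivisors_of_noZeroDivisors hg
  have hinj : Function.Injective f := IsLocalization.injective S hle
  have : IsDomain S := IsLocalization.isDomain_localization hle
  have hpr : ((Ideal.span {a, b}).map f).IsPrincipal := by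
    apply IsGCDMonoid.isPrincipal_of_exists_mul_ne_zero_isPrincipal
    refine ⟨I'.map f, ?_, ?_⟩
    · rw [← Ideal.map_mul, hI, Ideal.map_span, Set.image_singleton]
      simpa [Ideal.span_singleton_eq_bot] using (map_ne_zero_iff f hinj).mpr hc
    · rw [← Ideal.map_mul, hI, Ideal.map_span, Set.image_singleton]
      exact ⟨_, rfl⟩
  obtain ⟨d, hd⟩ := hpr.principal
  change _ = Ideal.span {d} at hd
  obtain ⟨d0, ⟨_, n0, rfl⟩, hd0⟩ := IsLocalization.exists_mk'_eq (Submonoid.powers g) d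
  have hgu : ∀ n : ℕ, IsUnit (f (g ^ n)) := fun n =>
    IsLocalization.map_units S (⟨g ^ n, n, rfl⟩ : Submonoid.powers g)
  have hd' : (Ideal.span {a, b}).map f = Ideal.span {f d0} := by
    rw [hd, ← hd0]
    have := IsLocalization.mk'_spec S d0 (⟨(fun x => g ^ x) n0, n0, rfl⟩ : Submonoid.powers g)
    rw [← this]
    rw [Ideal.span_singleton_mul_right_unit (hgu n0)]
  have hgen : ∀ r ∈ Ideal.span {a, b}, ∃ (n : ℕ) (s : R), g ^ n * r = d0 * s := by
    intro r hr
    have h1 := Ideal.mem_map_of_mem f hr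
    rw [hd', Ideal.mem_span_singleton] at h1
    obtain ⟨q, hq⟩ := h1
    obtain ⟨s, ⟨_, n, rfl⟩, hs⟩ := IsLocalization.exists_mk'_eq (Submonoid.powers g) q
    refine ⟨n, s, hinj ?_⟩
    have := IsLocalization.mk'_spec S s (⟨(fun x => g ^ x) n, n, rfl⟩ : Submonoid.powers g)
    rw [map_mul, map_mul, hq, ← hs]
    change _ = _ * algebraMap R S s
    rw [← this]
    change f (g ^ n) * _ = f d0 * (_ * f (g ^ n))
    ring
  obtain ⟨n1, r1, h1⟩ := hgen a (Ideal.subset_span (by simp))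
  obtain ⟨n2, r2, h2⟩ := hgen b (Ideal.subset_span (by simp))
  have hd1 : f d0 ∈ (Ideal.span {a, b}).map f := by
    rw [hd']; exact Ideal.mem_span_singleton_self _
  obtain ⟨n3, h3⟩ : ∃ n : ℕ, g ^ n * d0 ∈ Ideal.span {a, b} := by
    obtain ⟨⟨⟨i, hi⟩, ⟨_, n, rfl⟩⟩, h⟩ :=
      (IsLocalization.mem_map_algebraMap_iff (Submonoid.powers g) S).mp hd1
    refine ⟨n, ?_⟩
    have : d0 * g ^ n = i := hinj (by rw [map_mul]; exact h)
    rw [mul_comm, this]; exact hi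
  have hd00 : d0 ≠ 0 := by
    rintro rfl
    rw [zero_mul] at h1 h2
    have ha : a = 0 := (mul_eq_zero.mp h1).resolve_left (pow_ne_zero _ hg)
    have hb : b = 0 := (mul_eq_zero.mp h2).resolve_left (pow_ne_zero _ hg)
    subst ha hb
    simp at hI
    exact hc (Ideal.span_singleton_eq_bot.mp hI.symm)
  let C : Ideal R := Ideal.span {g ^ n2 * r1, g ^ n1 * r2}
  have hC : Ideal.span {g ^ (n1 + n2)} * Ideal.span {a, b} = Ideal.span {d0} * C := by
    have e1 : g ^ (n1 + n2) * a = d0 * (g ^ n2 * r1) := by linear_combination g ^ n2 * h1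
    have e2 : g ^ (n1 + n2) * b = d0 * (g ^ n1 * r2) := by linear_combination g ^ n1 * h2
    simp only [C, Ideal.span_mul_span', Set.singleton_mul, Set.image_pair, e1, e2]
  have hgC : g ^ (n1 + n2 + n3) ∈ C := by
    have h4 : g ^ (n1 + n2) * (g ^ n3 * d0) ∈ Ideal.span {g ^ (n1 + n2)} * Ideal.span {a, b} :=
      Ideal.mul_mem_mul (Ideal.mem_span_singleton_self _) h3
    rw [hC, Ideal.mem_span_singleton_mul] at h4
    obtain ⟨z, hz, h5⟩ := h4
    have : z = g ^ (n1 + n2 + n3) := mul_left_cancel₀ hd00 (by rw [h5]; ring)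
    rwa [← this]
  have hpC : p ^ (N * (n1 + n2 + n3)) ≤ C := by
    rw [pow_mul]
    refine (Ideal.pow_right_mono hN _).trans ?_
    rw [Ideal.span_singleton_pow, Ideal.span_singleton_le_iff_mem]
    exact hgC
  obtain ⟨j, hj⟩ := aux_pow p p' e he hp hpp _ C hpC
  exact ⟨_, _, j, pow_ne_zero _ hg, hd00, by rw [hC, hj]⟩

theorem aux_ufd {A S : Type*} [CommRing A] [IsDomain A] [UniqueFactorizationMonoid A] [CommRing S]
    (θ : A →+* S) (hθ : Function.Injective θ)
    (h : ∀ s : S, ∃ a m : A, IsUnit (θ m) ∧ θ m * s = θ a) : UniqueFactorizationMonoid S := by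
  let := θ.toAlgebra
  let M : Submonoid A := (IsUnit.submonoid S).comap θ
  have : IsLocalization M S :=
    { map_units := fun y => y.2
      surj := fun s => by
        obtain ⟨a, m, hm, e⟩ := h s
        exact ⟨(a, ⟨m, hm⟩), by rw [mul_comm]; exact e⟩
      exists_of_eq := fun {x y} hxy => ⟨1, by rw [hθ hxy]⟩ }
  exact UniqueFactorizationMonoid.of_isLocalization M S
/-- The affine plane. -/
noncomputable abbrev PA : Type := Polynomial (Polynomial k)

/-- Rational functions on the plane. -/
noncomputable abbrev PL : Type := FractionRing PA

/-- The rational elliptic curve. -/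
noncomputable def E : WeierstrassCurve.Affine K :=
  { a₁ := t + 1, a₂ := t, a₃ := t, a₄ := 0, a₆ := 0 }

noncomputable abbrev ER : Type := E.CoordinateRing

noncomputable def px : PA := Polynomial.C Polynomial.X
noncomputable def py : PA := Polynomial.X
noncomputable def pg : PA := px * py + py - px ^ 2
noncomputable def pf : PA := px ^ 3 - py ^ 2 - px * py

noncomputable def rx : ER := WeierstrassCurve.Affine.CoordinateRing.mk E (Polynomial.C Polynomial.X)
noncomputable def ry : ER := WeierstrassCurve.Affine.CoordinateRing.mk E Polynomial.X
noncomputable def rg : ER := rx * ry + ry - rx ^ 2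
noncomputable def rt : ER := algebraMap K ER t

theorem pg_ne : pg ≠ 0 := by
  intro h
  have := congrArg (fun p : PA => (p.eval 0).coeff 2) h
  simp [pg, px, py] at this

theorem pf_coeff (c : k) : pf ≠ Polynomial.C (Polynomial.C c) * pg := by
  intro h
  have := congrArg (fun p : PA => (p.eval 0).coeff 3) h
  simp [pf, pg, px, py, Polynomial.coeff_X_pow] at this

noncomputable def lx : PL := algebraMap PA PL px
noncomputable def ly : PL := algebraMap PA PL py
noncomputable def lt : PL := algebraMap PA PL pf / algebraMap PA PL pg

theorem lg_ne : algebraMap PA PL pg ≠ 0 := by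
  simpa using pg_ne

theorem lt_transc : Transcendental k lt := by
  intro h
  have h1 : ∃ c, algebraMap k PL c = lt := by
    have hi : IsIntegral k lt := h.isIntegral
    have : Algebra.IsAlgebraic k (IntermediateField.adjoin k {lt}) :=
      IntermediateField.isAlgebraic_adjoin_simple hi
    have h2 := IntermediateField.eq_bot_of_isAlgClosed_of_isAlgebraic
      (IntermediateField.adjoin k {lt})
    have h3 : lt ∈ IntermediateField.adjoin k {lt} :=
      IntermediateField.mem_adjoin_simple_self k lt
    rw [h2, IntermediateField.mem_bot] at h3
    exact h3
  obtain ⟨c, hc⟩ := h1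
  apply pf_coeff c
  apply IsFractionRing.injective PA PL
  rw [map_mul]
  rw [lt, eq_div_iff lg_ne] at hc
  rw [← hc]
  rfl

noncomputable def KtoL : K →+* PL :=
  RatFunc.liftRingHom (Polynomial.aeval lt).toRingHom (by
    intro p hp
    rw [Submonoid.mem_comap, mem_nonZeroDivisors_iff_ne_zero]
    have := (transcendental_iff_injective.mp lt_transc)
    exact (map_ne_zero_iff _ this).mpr (nonZeroDivisors.ne_zero hp))

theorem KtoL_t : KtoL t = lt := by
  rw [KtoL, t, RatFunc.liftRingHom_X]; simp

theorem KtoL_C (c : k) : KtoL (algebraMap k K c) = algebraMap k PL c := by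
  rw [KtoL, RatFunc.algebraMap_eq_C, RatFunc.liftRingHom_C]; simp

theorem lrel : ly ^ 2 + ((lt + 1) * lx + lt) * ly = lx ^ 3 + lt * lx ^ 2 := by
  have h : lt * algebraMap PA PL pg = algebraMap PA PL pf := by
    rw [lt, div_mul_cancel₀ _ lg_ne]
  simp only [pg, pf, map_add, map_mul, map_sub, map_pow] at h
  change lt * (lx * ly + ly - lx ^ 2) = lx ^ 3 - ly ^ 2 - lx * ly at h
  linear_combination h

noncomputable def RtoL : ER →+* PL :=
  AdjoinRoot.lift (Polynomial.eval₂RingHom KtoL lx) ly (by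
    have := lrel
    simp only [WeierstrassCurve.Affine.polynomial, E, map_zero, map_one, map_add,
      Polynomial.eval₂_add, Polynomial.eval₂_sub, Polynomial.eval₂_mul, Polynomial.eval₂_pow,
      Polynomial.eval₂_X, Polynomial.eval₂_C, Polynomial.eval₂_zero, Polynomial.eval₂_one,
      Polynomial.coe_eval₂RingHom, KtoL_t, map_mul, map_pow]
    linear_combination lrel)

noncomputable def θR : PA →+* ER :=
  Polynomial.eval₂RingHom (Polynomial.eval₂RingHom (algebraMap k ER) rx) ry

theorem θR_px : θR px = rx := by simp [θR, px]
theorem θR_py : θR py = ry := by simp [θR, py]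
theorem θR_pg : θR pg = rg := by simp [rg, pg, θR_px, θR_py]

theorem RtoL_alg (c : K) : RtoL (algebraMap K ER c) = KtoL c := by
  rw [IsScalarTower.algebraMap_apply K (Polynomial K) ER]
  simp only [RtoL, AdjoinRoot.algebraMap_eq, AdjoinRoot.lift_of]
  simp

theorem RtoL_x : RtoL rx = lx := by
  simp [RtoL, rx]

theorem RtoL_y : RtoL ry = ly := by
  simp [RtoL, ry]

theorem comp_eq : RtoL.comp θR = algebraMap PA PL := by
  apply Polynomial.ringHom_ext'
  · apply Polynomial.ringHom_ext
    · intro c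
      simp only [θR, RingHom.comp_apply, Polynomial.coe_eval₂RingHom, Polynomial.eval₂_C]
      rw [IsScalarTower.algebraMap_apply k K ER, RtoL_alg, KtoL_C]
      rfl
    · change RtoL (θR px) = _
      rw [θR_px, RtoL_x]; rfl
  · change RtoL (θR py) = _
    rw [θR_py, RtoL_y]; rfl

theorem rg_ne : rg ≠ 0 := by
  intro h
  apply lg_ne
  rw [← comp_eq, RingHom.comp_apply, θR_pg, h, map_zero]

theorem rrel : ry ^ 2 + ((rt + 1) * rx + rt) * ry = rx ^ 3 + rt * rx ^ 2 := by
  have h : WeierstrassCurve.Affine.CoordinateRing.mk E E.polynomial = 0 := AdjoinRoot.mk_self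
  have ht : rt = WeierstrassCurve.Affine.CoordinateRing.mk E (Polynomial.C (Polynomial.C t)) := rfl
  have e : E.polynomial = Polynomial.X ^ 2 + ((Polynomial.C (Polynomial.C t) + 1) *
      Polynomial.C Polynomial.X + Polynomial.C (Polynomial.C t)) * Polynomial.X -
      (Polynomial.C Polynomial.X ^ 3 + Polynomial.C (Polynomial.C t) *
        Polynomial.C Polynomial.X ^ 2) := by
    simp only [WeierstrassCurve.Affine.polynomial, E, map_add, map_mul, map_pow, map_zero, map_one]
    ring
  have h' := congrArg (WeierstrassCurve.Affine.CoordinateRing.mk E) e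
  rw [h] at h'
  simp only [map_add, map_sub, map_mul, map_pow, map_one] at h'
  simp only [ht, rx, ry]
  linear_combination -h'

theorem rtg : rt * rg = θR pf := by
  simp only [pf, map_add, map_mul, map_sub, map_pow, θR_px, θR_py, rg]
  linear_combination rrel

noncomputable abbrev ES : Type := Localization.Away rg

noncomputable def θS : PA →+* ES := (algebraMap ER ES).comp θR

theorem θS_inj : Function.Injective θS := by
  have hu : IsUnit (RtoL rg) := by
    rw [← θR_pg, ← RingHom.comp_apply, comp_eq]
    exact isUnit_iff_ne_zero.mpr lg_ne
  have : (IsLocalization.Away.lift rg hu : ES →+* PL).comp θS = algebraMap PA PL := by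
    rw [θS, ← RingHom.comp_assoc]
    rw [← comp_eq]
    congr 1
    refine RingHom.ext fun r => ?_
    rw [RingHom.comp_apply]
    exact IsLocalization.Away.lift_eq rg hu r
  have h2 := IsFractionRing.injective PA PL
  rw [← this, RingHom.coe_comp] at h2
  exact Function.Injective.of_comp h2

/-- Elements of the localisation which are fractions of polynomials. -/
noncomputable def fracSub : Subring ES where
  carrier := {s | ∃ a m : PA, IsUnit (θS m) ∧ θS m * s = θS a}
  mul_mem' := by
    rintro s s' ⟨a, m, hm, h⟩ ⟨a', m', hm', h'⟩
    exact ⟨a * a', m * m', by rw [map_mul]; exact hm.mul hm',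
      by rw [map_mul, map_mul, ← h, ← h']; ring⟩
  one_mem' := ⟨1, 1, by simp, by simp⟩
  add_mem' := by
    rintro s s' ⟨a, m, hm, h⟩ ⟨a', m', hm', h'⟩
    exact ⟨a * m' + a' * m, m * m', by rw [map_mul]; exact hm.mul hm',
      by rw [map_mul, map_add, map_mul, map_mul, ← h, ← h']; ring⟩
  zero_mem' := ⟨0, 1, by simp, by simp⟩
  neg_mem' := by
    rintro s ⟨a, m, hm, h⟩
    exact ⟨-a, m, hm, by rw [map_neg, ← h]; ring⟩

theorem frac_of (a : PA) : θS a ∈ fracSub := ⟨a, 1, by simp, by simp⟩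

theorem frac_div {s s' u : ES} (hs : s ∈ fracSub) (hs' : s' ∈ fracSub) (hu : IsUnit s')
    (h : s' * u = s) : u ∈ fracSub := by
  obtain ⟨a, m, hm, e⟩ := hs
  obtain ⟨a', m', hm', e'⟩ := hs'
  refine ⟨a * m', m * a', ?_, ?_⟩
  · rw [map_mul, ← e']; exact hm.mul (hm'.mul hu)
  · rw [map_mul, map_mul, ← e, ← e', ← h]; ring

theorem frac_rg_unit : IsUnit (algebraMap ER ES rg) :=
  IsLocalization.Away.algebraMap_isUnit rg

theorem frac_t : algebraMap ER ES rt ∈ fracSub := by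
  refine frac_div (frac_of pf) (frac_of pg) ?_ ?_
  · rw [θS, RingHom.comp_apply, θR_pg]; exact frac_rg_unit
  · rw [θS, RingHom.comp_apply, RingHom.comp_apply, θR_pg, ← map_mul, ← rtg, mul_comm]

noncomputable def KS : K →+* ES := (algebraMap ER ES).comp (algebraMap K ER)

theorem frac_poly (p : Polynomial k) : KS (algebraMap (Polynomial k) K p) ∈ fracSub := by
  induction p using Polynomial.induction_on' with
  | add p q hp hq => rw [map_add, map_add]; exact fracSub.add_mem hp hq
  | monomial n c =>
    rw [← Polynomial.C_mul_X_pow_eq_monomial, map_mul, map_mul, map_pow, map_pow]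
    refine fracSub.mul_mem ?_ (fracSub.pow_mem ?_ n)
    · have : KS (algebraMap (Polynomial k) K (Polynomial.C c)) = θS (Polynomial.C (Polynomial.C c)) := by
        simp only [KS, θS, θR, RingHom.comp_apply, Polynomial.coe_eval₂RingHom, Polynomial.eval₂_C]
        rw [IsScalarTower.algebraMap_apply k K ER, RatFunc.algebraMap_C, RatFunc.algebraMap_eq_C]
      rw [this]; exact frac_of _
    · rw [RatFunc.algebraMap_X]; exact frac_t

theorem frac_K (c : K) : KS c ∈ fracSub := by
  obtain ⟨p, q, hq, rfl⟩ : ∃ p q : Polynomial k, q ≠ 0 ∧ c = algebraMap _ K p / algebraMap _ K q :=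
    ⟨c.num, c.denom, c.denom_ne_zero, (RatFunc.num_div_denom c).symm⟩
  have hq' : algebraMap (Polynomial k) K q ≠ 0 := RatFunc.algebraMap_ne_zero hq
  refine frac_div (frac_poly p) (frac_poly q) ((isUnit_iff_ne_zero.mpr hq').map KS) ?_
  rw [← map_mul, mul_div_cancel₀ _ hq']

theorem frac_R (r : ER) : algebraMap ER ES r ∈ fracSub := by
  obtain ⟨p, rfl⟩ := AdjoinRoot.mk_surjective r
  induction p using Polynomial.induction_on' with
  | add p q hp hq => rw [map_add, map_add]; exact fracSub.add_mem hp hq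
  | monomial n p =>
    rw [← Polynomial.C_mul_X_pow_eq_monomial, map_mul, map_mul, map_pow, map_pow]
    refine fracSub.mul_mem ?_ (fracSub.pow_mem ?_ n)
    · induction p using Polynomial.induction_on' with
      | add p q hp hq =>
        rw [map_add, map_add, map_add]; exact fracSub.add_mem hp hq
      | monomial n c =>
        rw [← Polynomial.C_mul_X_pow_eq_monomial]
        simp only [map_mul, map_pow]
        refine fracSub.mul_mem ?_ (fracSub.pow_mem ?_ n)
        · exact frac_K c
        · have := frac_of px
          rwa [θS, RingHom.comp_apply, θR_px] at this
    · have := frac_of py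
      rwa [θS, RingHom.comp_apply, θR_py] at this

instance ufdES : UniqueFactorizationMonoid ES := by
  apply aux_ufd θS θS_inj
  intro s
  change s ∈ fracSub
  obtain ⟨r, ⟨_, n, rfl⟩, rfl⟩ := IsLocalization.exists_mk'_eq (Submonoid.powers rg) s
  refine frac_div (frac_R r) (frac_R (rg ^ n)) ?_ ?_
  · rw [map_pow]; exact frac_rg_unit.pow n
  · rw [mul_comm]
    exact IsLocalization.mk'_spec ES r (⟨(fun x => rg ^ x) n, n, rfl⟩ : Submonoid.powers rg)

theorem two_K : (2 : K) = 0 := by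
  have h : (2 : k) = 0 := CharP.cast_eq_zero k 2
  have h' := congrArg (algebraMap k K) h
  rwa [map_ofNat, map_zero] at h'

theorem t_ne : t ≠ 0 := RatFunc.X_ne_zero

theorem t1_ne : t + 1 ≠ 0 := by
  have h : (Polynomial.X + Polynomial.C 1 : Polynomial k) ≠ 0 := Polynomial.X_add_C_ne_zero 1
  have := RatFunc.algebraMap_ne_zero h
  simpa [t] using this

theorem t2_ne : t ^ 2 + t + 1 ≠ 0 := by
  have h : (Polynomial.X ^ 2 + Polynomial.X + 1 : Polynomial k) ≠ 0 := by
    intro h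
    have := congrArg (fun p : Polynomial k => p.coeff 2) h
    simp [Polynomial.coeff_X, Polynomial.coeff_one] at this
  have := RatFunc.algebraMap_ne_zero h
  simpa [t] using this

theorem E_Δ : E.Δ ≠ 0 := by
  have : E.Δ = t ^ 5 * (t ^ 2 + t + 1) := by
    simp only [WeierstrassCurve.Δ, WeierstrassCurve.b₂, WeierstrassCurve.b₄, WeierstrassCurve.b₆,
      WeierstrassCurve.b₈, E]
    have := two_K
    grind
  rw [this]
  exact mul_ne_zero (pow_ne_zero _ t_ne) t2_ne

theorem E_ns {x y : K} (h : y ^ 2 + (t + 1) * x * y + t * y = x ^ 3 + t * x ^ 2) :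
    E.Nonsingular x y := by
  rw [← WeierstrassCurve.Affine.equation_iff_nonsingular_of_Δ_ne_zero E_Δ,
    WeierstrassCurve.Affine.equation_iff]
  simp only [E]
  linear_combination h

theorem E_ns0 : E.Nonsingular 0 0 := E_ns (by ring)

open WeierstrassCurve.Affine CoordinateRing

theorem X0 : XClass E 0 = rx := by simp [XClass, rx]
theorem Y0 : YClass E (Polynomial.C 0) = ry := by simp [YClass, ry]

theorem p0_eq : XYIdeal E 0 (Polynomial.C 0) = Ideal.span {rx, ry} := by
  rw [XYIdeal, X0, Y0]

theorem p0_max : (XYIdeal E 0 (Polynomial.C 0)).IsMaximal := by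
  have h : (E.polynomial.eval (Polynomial.C 0)).eval 0 = 0 := by
    have := E_ns0.1
    rwa [Equation, Polynomial.evalEval] at this
  apply Ideal.Quotient.maximal_of_isField
  exact (quotientXYIdealEquiv h).toMulEquiv.isField (Field.toIsField K)

theorem p0_pow : XYIdeal E 0 (Polynomial.C 0) ^ 6 ≤ Ideal.span {rg} := by
  have h1 : XYIdeal E 0 (Polynomial.C 0) ≤ Ideal.span {rx} ⊔ Ideal.span {rg} := by
    rw [p0_eq, Ideal.span_le]
    have hx : rx ∈ Ideal.span {rx} ⊔ Ideal.span {rg} :=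
      Ideal.mem_sup_left (Ideal.mem_span_singleton_self _)
    have hg : rg ∈ Ideal.span {rx} ⊔ Ideal.span {rg} :=
      Ideal.mem_sup_right (Ideal.mem_span_singleton_self _)
    rintro z (rfl | rfl)
    · exact hx
    · have : ry = rg + (rx - ry) * rx := by rw [rg]; ring
      rw [SetLike.mem_coe, this]
      exact Ideal.add_mem _ hg (Ideal.mul_mem_left _ _ hx)
  have h2 : rx ^ 5 ∈ Ideal.span {rg} := by
    rw [Ideal.mem_span_singleton]
    refine ⟨(rx + 1) ^ 2 * rt + (rg + 2 * rx ^ 2 + rx * (rx + 1)), ?_⟩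
    have := rrel
    rw [rg]
    linear_combination (-(rx+1)^2) * this
  calc XYIdeal E 0 (Polynomial.C 0) ^ 6 ≤ (Ideal.span {rx} ⊔ Ideal.span {rg}) ^ (5 + 1) :=
        Ideal.pow_right_mono h1 6
    _ ≤ Ideal.span {rx} ^ 5 ⊔ Ideal.span {rg} ^ 1 := Ideal.sup_pow_add_le_pow_sup_pow
    _ ≤ Ideal.span {rg} := by
        rw [pow_one, Ideal.span_singleton_pow]
        exact sup_le (by rwa [Ideal.span_singleton_le_iff_mem]) le_rfl

open scoped Classical in
noncomputable def P0 : E.Point := .some 0 0 E_ns0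

open scoped Classical in
theorem E_gen (Q : E.Point) : ∃ j : ℕ, Q = j • P0 := by
  rcases Q with _ | ⟨x, y, h⟩
  · exact ⟨0, by rw [zero_nsmul]; rfl⟩
  obtain ⟨a, b, j, ha, hb, hab⟩ := aux_ideal rg rg_ne (XYIdeal E 0 (Polynomial.C 0))
    (XYIdeal E 0 (Polynomial.C (E.negY 0 0))) (XClass E 0) (XClass_ne_zero 0) p0_max
    (by rw [mul_comm, XYIdeal_neg_mul E_ns0]; rfl) 6 p0_pow (XClass E x)
    (YClass E (Polynomial.C y)) (XClass E x) (XClass_ne_zero x)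
    (XYIdeal E x (Polynomial.C (E.negY x y)))
    (by rw [mul_comm]; exact XYIdeal_neg_mul h)
  refine ⟨j, ?_⟩
  apply Point.toClass_injective
  rw [map_nsmul, P0, Point.toClass_some, Point.toClass_some]
  have : ClassGroup.mk (FunctionField E) (XYIdeal' h) =
      ClassGroup.mk (FunctionField E) (XYIdeal' E_ns0 ^ j) := by
    refine (ClassGroup.mk_eq_mk_of_coe_ideal (XYIdeal'_eq h)
      (J' := XYIdeal E 0 (Polynomial.C 0) ^ j) ?_).mpr ⟨a, b, ha, hb, hab⟩
    rw [Units.val_pow_eq_pow_val, XYIdeal'_eq, FractionalIdeal.coeIdeal_pow]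
  rw [map_pow] at this
  exact congrArg Additive.ofMul this

open scoped Classical in
theorem P0_dbl (h : E.Nonsingular t (t ^ 2)) : P0 + P0 = .some t (t ^ 2) h := by
  have h2 := two_K
  have hne : (0 : K) ≠ E.negY 0 0 := by
    have := t_ne
    simp only [negY, E]; grind
  rw [P0, Point.add_self_of_Y_ne hne]
  have hs : E.slope 0 0 0 0 = 0 := by
    rw [slope_of_Y_ne rfl hne]; simp [E]
  simp only [Point.some.injEq, hs]
  simp only [addX, addY, negAddY, negY, E]
  constructor <;> grind

open scoped Classical in
theorem P0_tpl (h : E.Nonsingular t (t ^ 2)) : P0 + .some t (t ^ 2) h = - .some t (t ^ 2) h := by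
  have h2 := two_K
  have hne : (0 : K) ≠ t := t_ne.symm
  rw [P0, Point.add_of_X_ne hne, Point.neg_some]
  have hs : E.slope 0 t 0 (t ^ 2) = t := by
    rw [slope_of_X_ne hne]; have := t_ne; field_simp; ring
  simp only [Point.some.injEq, hs]
  simp only [addX, addY, negAddY, negY, E]
  constructor <;> grind

theorem five_grp {G : Type*} [AddCommGroup G] (P Q : G) (d : P + P = Q) (e : P + Q = -Q) (j : ℕ) :
    j • P = 0 ∨ j • P = P ∨ j • P = Q ∨ j • P = -Q ∨ j • P = -P := by
  have p3 : 3 • P = -Q := by rw [← e, ← d]; abel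
  have p2 : 2 • P = Q := by rw [← d]; abel
  have p5 : 5 • P = 0 := by
    rw [show 5 = 2 + 3 from rfl, add_nsmul, p2, p3, add_neg_cancel]
  have p4 : 4 • P = -P := eq_neg_of_add_eq_zero_left (by rw [← p5]; abel)
  have hm : j • P = (j % 5) • P := by
    conv_lhs => rw [← Nat.div_add_mod j 5, add_nsmul, mul_nsmul, p5, nsmul_zero, zero_add]
  rw [hm]
  have : j % 5 < 5 := Nat.mod_lt _ (by norm_num)
  interval_cases j % 5 <;> simp [p2, p3, p4]

open scoped Classical in
theorem E_x {x y : K} (h : E.Nonsingular x y) : x = 0 ∨ x = t := by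
  have h2 := two_K
  have hq : E.Nonsingular t (t ^ 2) := E_ns (by grind)
  obtain ⟨j, hj⟩ := E_gen (.some x y h)
  rcases five_grp (G := E.Point) P0 (.some t (t ^ 2) hq) (P0_dbl hq) (P0_tpl hq) j with h | h | h | h | h <;> rw [h] at hj
  · cases hj
  · rw [P0, Point.some.injEq] at hj; exact Or.inl hj.1
  · rw [Point.some.injEq] at hj; exact Or.inr hj.1
  · have h3 := hj.trans (Point.neg_some hq)
    rw [Point.some.injEq] at h3; exact Or.inr h3.1
  · have h3 := hj.trans (Point.neg_some E_ns0)
    rw [Point.some.injEq] at h3; exact Or.inl h3.1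

theorem ver_id {F : Type*} [CommRing F] (h2 : (2 : F) = 0) (t X Y : F)
    (h : Y ^ 2 + (t ^ 2 + 1) * X * Y + t ^ 2 * Y = X ^ 3 + t ^ 2 * X ^ 2) (D N M L : F)
    (hD : D = (t + 1) ^ 2 * X + t ^ 2) (hN : N = X ^ 2 + (t ^ 2 + t) * X + t ^ 3)
    (hM : M = (t + 1) * X ^ 2 + t ^ 4)
    (hL : L = M * Y + X * ((t ^ 2 + (t + 1) ^ 3) * X ^ 2 + (t + 1) * t ^ 4)) :
    L ^ 2 + (t + 1) * N * L * D + t * L * D ^ 2 = N ^ 3 * D + t * N ^ 2 * D ^ 2 := by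
  subst hL hM hN hD
  linear_combination ((t + 1) * X ^ 2 + t ^ 4) ^ 2 * h + (
      (1)*X^5*Y + (1)*X^6 + (1)*t*X^4*Y + (1)*t*X^5 + (5)*t*X^5*Y + (4)*t*X^6 +
      (5)*t^2*X^4*Y + (5)*t^2*X^5 + (9)*t^2*X^5*Y + (10)*t^2*X^6 + (2)*t^3*X^3*Y +
      (1)*t^3*X^4 + (10)*t^3*X^4*Y + (9)*t^3*X^5 + (6)*t^3*X^5*Y + (18)*t^3*X^6 +
      (8)*t^4*X^3*Y + (-1)*t^4*X^4 + (10)*t^4*X^4*Y + (18)*t^4*X^5 + (1)*t^4*X^5*Y +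
      (17)*t^4*X^6 + (2)*t^5*X^2*Y + (-2)*t^5*X^3 + (13)*t^5*X^3*Y + (-6)*t^5*X^4 +
      (5)*t^5*X^4*Y + (26)*t^5*X^5 + (7)*t^5*X^6 + (5)*t^6*X^2*Y + (-15)*t^6*X^3 +
      (9)*t^6*X^3*Y + (3)*t^6*X^4 + (1)*t^6*X^4*Y + (19)*t^6*X^5 + (1)*t^6*X^6 +
      (2)*t^7*X*Y + (-4)*t^7*X^2 + (6)*t^7*X^2*Y + (-21)*t^7*X^3 + (1)*t^7*X^3*Y +
      (7)*t^7*X^4 + (7)*t^7*X^5 + (5)*t^8*X*Y + (-12)*t^8*X^2 + (4)*t^8*X^2*Y +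
      (-10)*t^8*X^3 + (2)*t^8*X^4 + (1)*t^8*X^5 + (1)*t^9*Y + (-3)*t^9*X + (4)*t^9*X*Y +
      (-7)*t^9*X^2 + (1)*t^9*X^2*Y + (-2)*t^9*X^3 + (-4)*t^10*X + (-1)*t^10*X^2 +
      (-1)*t^11 + (-1)*t^11*X) * h2

theorem W_eq {x y : K} (h : W.Nonsingular x y) :
    y ^ 2 + (t ^ 2 + 1) * x * y + t ^ 2 * y = x ^ 3 + t ^ 2 * x ^ 2 := by
  have := (WeierstrassCurve.Affine.equation_iff _ _).mp h.1
  simp only [W] at this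
  linear_combination this

theorem W_Δ : W.Δ ≠ 0 := by
  have : W.Δ = t ^ 10 * (t ^ 2 + t + 1) ^ 2 := by
    simp only [WeierstrassCurve.Δ, WeierstrassCurve.b₂, WeierstrassCurve.b₄, WeierstrassCurve.b₆,
      WeierstrassCurve.b₈, W]
    have := two_K
    grind
  rw [this]
  exact mul_ne_zero (pow_ne_zero _ t_ne) (pow_ne_zero _ t2_ne)

theorem W_ns {x y : K} (h : y ^ 2 + (t ^ 2 + 1) * x * y + t ^ 2 * y = x ^ 3 + t ^ 2 * x ^ 2) :
    W.Nonsingular x y := by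
  rw [← WeierstrassCurve.Affine.equation_iff_nonsingular_of_Δ_ne_zero W_Δ,
    WeierstrassCurve.Affine.equation_iff]
  simp only [W]
  linear_combination h

theorem W_x {X Y : K} (h : W.Nonsingular X Y) :
    (t + 1) ^ 2 * X + t ^ 2 = 0 ∨ X = 0 ∨ X = t ∨ X = t ^ 2 ∨ X = t ^ 2 + t ^ 3 := by
  have h2 := two_K
  by_cases hD : (t + 1) ^ 2 * X + t ^ 2 = 0
  · exact Or.inl hD
  right
  have key := ver_id h2 t X Y (W_eq h) _ _ _ _ rfl rfl rfl rfl
  generalize hDD : (t + 1) ^ 2 * X + t ^ 2 = D at *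
  generalize hN : X ^ 2 + (t ^ 2 + t) * X + t ^ 3 = N at *
  generalize _ * Y + X * _ = L at key
  have hE : E.Nonsingular (N / D) (L / D ^ 2) := by
    apply E_ns
    field_simp
    linear_combination key
  rcases E_x hE with h0 | h0
  · rw [div_eq_zero_iff, or_iff_left hD] at h0
    have : (X - t) * (X - t ^ 2) = 0 := by
      rw [h0] at hN
      linear_combination hN - (t ^ 2 + t) * X * h2
    rcases mul_eq_zero.mp this with h | h
    · exact Or.inr (Or.inl (sub_eq_zero.mp h))
    · exact Or.inr (Or.inr (Or.inl (sub_eq_zero.mp h)))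
  · rw [div_eq_iff hD, ← hDD, ← hN] at h0
    have : X * (X - (t ^ 2 + t ^ 3)) = 0 := by
      linear_combination h0 + (t ^ 2 * X - t ^ 2 * X) * h2
    rcases mul_eq_zero.mp this with h | h
    · exact Or.inl h
    · exact Or.inr (Or.inr (Or.inr (sub_eq_zero.mp h)))

theorem T_ns : W.Nonsingular (t ^ 2 / (t + 1) ^ 2) (t ^ 4 / (t + 1) ^ 3) := by
  apply W_ns
  have h2 := two_K
  have := t1_ne
  field_simp
  grind

noncomputable def Wpts : List (K × K) :=
  [(t ^ 2 / (t + 1) ^ 2, t ^ 4 / (t + 1) ^ 3), (0, 0), (0, t ^ 2), (t, t), (t, t ^ 2 + t ^ 3),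
    (t ^ 2, 0), (t ^ 2, t ^ 4), (t ^ 2 + t ^ 3, t ^ 4), (t ^ 2 + t ^ 3, t ^ 3 + t ^ 5)]

theorem split_y {a b y : K} (h : (y - a) * (y - b) = 0) : y = a ∨ y = b := by
  rcases mul_eq_zero.mp h with h | h
  · exact Or.inl (sub_eq_zero.mp h)
  · exact Or.inr (sub_eq_zero.mp h)

theorem W_mem {x y : K} (h : W.Nonsingular x y) : (x, y) ∈ Wpts := by
  have h2 := two_K
  have e := W_eq h
  rcases W_x h with h | rfl | rfl | rfl | rfl
  · have h1 := t1_ne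
    have hx : x = t ^ 2 / (t + 1) ^ 2 := by
      rw [eq_div_iff (pow_ne_zero 2 h1)]
      linear_combination h - t ^ 2 * h2
    have hy : y = t ^ 4 / (t + 1) ^ 3 := by
      have e2 := W_eq T_ns
      rw [← hx] at e2
      generalize t ^ 4 / (t + 1) ^ 3 = z at *
      have : (y - z) ^ 2 = 0 := by
        linear_combination e - e2 - (y - z) * h + ((t * x - z) * (y - z)) * h2
      exact sub_eq_zero.mp (pow_eq_zero_iff (two_ne_zero) |>.mp this)
    rw [hx, hy]; simp [Wpts]
  · rcases split_y (a := 0) (b := t ^ 2) (y := y) (by grind) with rfl | rfl <;> simp [Wpts]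
  · rcases split_y (a := t) (b := t ^ 2 + t ^ 3) (y := y) (by grind) with rfl | rfl <;> simp [Wpts]
  · rcases split_y (a := 0) (b := t ^ 4) (y := y) (by grind) with rfl | rfl <;> simp [Wpts]
  · rcases split_y (a := t ^ 4) (b := t ^ 3 + t ^ 5) (y := y) (by grind) with rfl | rfl <;>
      simp [Wpts]

theorem W_ns0 : W.Nonsingular 0 0 := W_ns (by ring)
theorem W_ns1 : W.Nonsingular (t ^ 2) (t ^ 4) := W_ns (by have := two_K; grind)

open scoped Classical in
theorem W_dbl : (.some 0 0 W_ns0 + .some 0 0 W_ns0 : W.Point) = .some (t ^ 2) (t ^ 4) W_ns1 := by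
  have h2 := two_K
  have hne : (0 : K) ≠ W.negY 0 0 := by
    have := pow_ne_zero 2 t_ne
    simp only [negY, W]; grind
  rw [Point.add_self_of_Y_ne hne]
  have hs : W.slope 0 0 0 0 = 0 := by
    rw [slope_of_Y_ne rfl hne]; simp [W]
  simp only [Point.some.injEq, hs]
  simp only [addX, addY, negAddY, negY, W]
  constructor <;> grind

open scoped Classical in
theorem W_tpl : (.some 0 0 W_ns0 + .some (t ^ 2) (t ^ 4) W_ns1 : W.Point) =
    - .some (t ^ 2) (t ^ 4) W_ns1 := by
  have h2 := two_K
  have hne : (0 : K) ≠ t ^ 2 := (pow_ne_zero 2 t_ne).symm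
  rw [Point.add_of_X_ne hne, Point.neg_some]
  have hs : W.slope 0 (t ^ 2) 0 (t ^ 4) = t ^ 2 := by
    rw [slope_of_X_ne hne]; have := t_ne; field_simp; ring
  simp only [Point.some.injEq, hs]
  simp only [addX, addY, negAddY, negY, W]
  constructor <;> grind

open scoped Classical in
theorem W_two : (.some _ _ T_ns + .some _ _ T_ns : W.Point) = 0 := by
  apply Point.add_self_of_Y_eq
  have h2 := two_K
  have := t1_ne
  simp only [negY, W]
  field_simp
  grind

theorem grp_final {G α : Type*} [AddCommGroup G] (T P Q : G) (hT : T + T = 0) (hT0 : T ≠ 0)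
    (hP0 : P ≠ 0) (d : P + P = Q) (e : P + Q = -Q) (f : G → α) (hf : Function.Injective f)
    (l : List α) (hl : l.length = 10) (hm : ∀ g, f g ∈ l) : Nonempty (G ≃+ ZMod 10) := by
  classical
  have p3 : 3 • P = -Q := by rw [← e, ← d]; abel
  have p2 : 2 • P = Q := by rw [← d]; abel
  have p5 : 5 • P = 0 := by
    rw [show 5 = 2 + 3 from rfl, add_nsmul, p2, p3, add_neg_cancel]
  have o5 : addOrderOf P = 5 := by
    have : Fact (Nat.Prime 5) := ⟨by norm_num⟩
    exact addOrderOf_eq_prime p5 hP0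
  have o2 : addOrderOf T = 2 := addOrderOf_eq_prime (by rw [two_nsmul, hT]) hT0
  have o10 : addOrderOf (T + P) = 10 := by
    rw [(AddCommute.all T P).addOrderOf_add_eq_mul_addOrderOf_of_coprime (by rw [o2, o5]; norm_num),
      o2, o5]
  let f' : G → l.toFinset := fun g => ⟨f g, List.mem_toFinset.mpr (hm g)⟩
  have hf' : Function.Injective f' := fun a b h => hf (Subtype.ext_iff.mp h)
  have : Finite G := Finite.of_injective f' hf'
  have h1 : Nat.card G ≤ 10 := by
    have := Nat.card_le_card_of_injective f' hf'
    rw [Nat.card_eq_finsetCard] at this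
    exact this.trans (hl ▸ List.toFinset_card_le l)
  have h3 : Nat.card G = 10 := le_antisymm h1
    (o10 ▸ Nat.le_of_dvd Nat.card_pos (addOrderOf_dvd_natCard (T + P)))
  have hc : IsAddCyclic G := isAddCyclic_of_addOrderOf_eq_card (T + P) (o10.trans h3.symm)
  have z := zmodAddCyclicAddEquiv hc
  rw [h3] at z
  exact ⟨z.symm⟩

/-- Coordinates of a point. -/
noncomputable def coords : W.Point → Option (K × K)
  | .zero => none
  | .some x y _ => some (x, y)

theorem coords_inj : Function.Injective coords := by
  rintro (_ | ⟨x, y, h⟩) (_ | ⟨x', y', h'⟩) e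
  · rfl
  · cases e
  · cases e
  · simp only [coords, Option.some.injEq, Prod.mk.injEq] at e
    obtain ⟨rfl, rfl⟩ := e
    rfl

open scoped Classical in
theorem final : Nonempty (W.Point ≃+ (ZMod 10)) := by
  refine grp_final (G := W.Point) (.some _ _ T_ns) (.some 0 0 W_ns0) (.some (t ^ 2) (t ^ 4) W_ns1)
    W_two (Point.some_ne_zero _) (Point.some_ne_zero _) W_dbl W_tpl coords coords_inj
    (none :: Wpts.map some) rfl ?_
  rintro (_ | ⟨x, y, h⟩)
  · exact List.mem_cons_self
  · exact List.mem_cons_of_mem _ (List.mem_map_of_mem (W_mem h))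

end Aux10

open scoped Classical in
/-- The group of points of `W : y² + (t²+1)xy + t²y = x³ + t²x²` over `K = k(t)` is isomorphic to `ℤ/10ℤ`. -/
theorem points_iso_zmod_ten : Nonempty (W.Point ≃+ (ZMod 10)) := by
  exact Aux10.final
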